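/- arXiv:2601.15604 — 5 statements merged into one kernel-verified Lean document; each statement's English description precedes it below -/
import Mathlib

section
/- Let n be a nonempty finite index type, let P : Matrix n n ℝ be a symmetric positive definite matrix, let x : n → ℝ be a vector with xᵢ > 0 for every i, and let C > 0. Let î be an index maximizing the ratio Pᵢᵢ/xᵢ over all i ∈ n. Then the vector ĥ = C • e_î maximizes the objective h ↦ (hᵀ P h)/(hᵀ x) over the scaled simplex S_C = {h : n → ℝ | hᵢ ≥ 0 for all i, ∑ᵢ hᵢ = C}; that is, ĥ ∈ S_C and for every h ∈ S_C one has (hᵀ P h)/(hᵀ x) ≤ (ĥᵀ P ĥ)/(ĥᵀ x) = C · P_{îî}/x_{î}. -/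
open Matrix

/-!
Evaluating the quadratic form of `P` at `e_i - e_j` gives `P i j + P j i ≤ P i i + P j j`. Averaging
this with the weights `h i * h j` bounds `hᵀ P h` by `(∑ i, h i) * ∑ i, h i * P i i`, and
`P i i ≤ M * x i`, with `M` the largest ratio `P i i / x i`, bounds the last sum by `M * hᵀ x`. On
the simplex `∑ i, h i = C`, so the objective is at most `C * M`, its value at the vertex `C • e_i₀`.
-/

section OrderedRing

variable {n R : Type*}

theorem posSemidef_apply_add_apply_le [Ring R] [PartialOrder R] [IsOrderedAddMonoid R] [StarRing R]
    {A : Matrix n n R} (hA : A.PosSemidef) (i j : n) : A i j + A j i ≤ A i i + A j j := by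
  have form_nonneg := (hA.submatrix ![i, j]).dotProduct_mulVec_nonneg ![1, -1]
  have form_eq : star ![1, -1] ⬝ᵥ A.submatrix ![i, j] ![i, j] *ᵥ ![1, -1] =
      (A i i + A j j) - (A i j + A j i) := by
    simp only [dotProduct, mulVec, Pi.star_apply, submatrix_apply, Fin.sum_univ_two, cons_val_zero,
      cons_val_one, star_one, star_neg, one_mul, mul_one, neg_mul, mul_neg]
    abel
  rwa [form_eq, sub_nonneg] at form_nonneg

variable [Fintype n]

theorem dotProduct_pos_of_pos_of_forall_pos [Semiring R] [PartialOrder R] [IsStrictOrderedRing R]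
    {v w : n → R} (hv : 0 < v) (hw : ∀ i, 0 < w i) : 0 < v ⬝ᵥ w := by
  obtain ⟨hv_nonneg, i, hvi⟩ := Pi.lt_def.mp hv
  exact Finset.sum_pos' (fun j _ => mul_nonneg (hv_nonneg j) (hw j).le)
    ⟨i, Finset.mem_univ i, mul_pos hvi (hw i)⟩

theorem dotProduct_mulVec_mono_of_nonneg [Semiring R] [PartialOrder R] [IsOrderedRing R]
    {A B : Matrix n n R} (hAB : ∀ i j, A i j ≤ B i j) {v w : n → R} (hv : 0 ≤ v) (hw : 0 ≤ w) :
    v ⬝ᵥ A *ᵥ w ≤ v ⬝ᵥ B *ᵥ w :=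
  dotProduct_le_dotProduct_of_nonneg_left
    (fun i => dotProduct_le_dotProduct_of_nonneg_right (hAB i) hw) hv

theorem dotProduct_mulVec_self_le_sum_mul_dotProduct_diag [CommRing R] [LinearOrder R]
    [IsStrictOrderedRing R] {A : Matrix n n R} (hA : ∀ i j, A i j + A j i ≤ A i i + A j j)
    {v : n → R} (hv : 0 ≤ v) : v ⬝ᵥ A *ᵥ v ≤ (∑ i, v i) * (v ⬝ᵥ A.diag) := by
  refine le_of_mul_le_mul_left ?_ (two_pos : (0 : R) < 2)
  calc 2 * (v ⬝ᵥ A *ᵥ v)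
      = v ⬝ᵥ (A + Aᵀ) *ᵥ v := by
        rw [add_mulVec, dotProduct_add, dotProduct_transpose_mulVec, two_mul]
    _ ≤ v ⬝ᵥ (vecMulVec A.diag 1 + vecMulVec 1 A.diag) *ᵥ v :=
        dotProduct_mulVec_mono_of_nonneg
          (fun i j => by simpa [vecMulVec_apply] using hA i j) hv hv
    _ = 2 * ((∑ i, v i) * (v ⬝ᵥ A.diag)) := by
        simp only [add_mulVec, vecMulVec_mulVec, dotProduct_add, dotProduct_smul, dotProduct_one,
          one_dotProduct, dotProduct_comm A.diag v, op_smul_eq_mul]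
        ring

end OrderedRing

section Field

variable {n K : Type*} [Fintype n]

theorem smul_single_dotProduct_mulVec_div_dotProduct [Field K] [DecidableEq n] (A : Matrix n n K)
    (x : n → K) {C : K} (hC : C ≠ 0) (i : n) :
    (C • (Pi.single i 1 : n → K)) ⬝ᵥ A *ᵥ (C • (Pi.single i 1 : n → K)) /
      ((C • (Pi.single i 1 : n → K)) ⬝ᵥ x) = C * A i i / x i := by
  simp only [mulVec_smul, smul_dotProduct, dotProduct_smul, mulVec_single_one,
    single_one_dotProduct, col_apply, smul_eq_mul]
  exact mul_div_mul_left _ _ hC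

variable [Field K] [LinearOrder K] [IsStrictOrderedRing K]

theorem dotProduct_mulVec_div_dotProduct_le_sum_mul {A : Matrix n n K}
    (hA : ∀ i j, A i j + A j i ≤ A i i + A j j) {x v : n → K} {M : K}
    (hM : ∀ i, A i i ≤ M * x i) (hv : 0 ≤ v) (hvx : 0 < v ⬝ᵥ x) :
    v ⬝ᵥ A *ᵥ v / v ⬝ᵥ x ≤ (∑ i, v i) * M := by
  have diag_le : v ⬝ᵥ A.diag ≤ M * (v ⬝ᵥ x) :=
    (dotProduct_le_dotProduct_of_nonneg_left (v := M • x) hM hv).trans_eq (dotProduct_smul M v x)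
  rw [div_le_iff₀ hvx, mul_assoc]
  exact (dotProduct_mulVec_self_le_sum_mul_dotProduct_diag hA hv).trans
    (mul_le_mul_of_nonneg_left diag_le (Finset.sum_nonneg fun i _ => hv i))

theorem stmt_0_general [DecidableEq n] (P : Matrix n n K)
    (hP : ∀ i j, P i j + P j i ≤ P i i + P j j) (x : n → K) (hx : ∀ i, 0 < x i)
    (C : K) (hC : 0 < C) (i0 : n) (hi0 : ∀ i, P i i / x i ≤ P i0 i0 / x i0) :
    (C • (Pi.single i0 1 : n → K)) ∈ {h : n → K | (∀ i, 0 ≤ h i) ∧ ∑ i, h i = C} ∧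
    (∀ h ∈ {h : n → K | (∀ i, 0 ≤ h i) ∧ ∑ i, h i = C},
      h ⬝ᵥ P *ᵥ h / h ⬝ᵥ x ≤
        (C • (Pi.single i0 1 : n → K)) ⬝ᵥ P *ᵥ (C • (Pi.single i0 1 : n → K)) /
          ((C • (Pi.single i0 1 : n → K)) ⬝ᵥ x)) ∧
    (C • (Pi.single i0 1 : n → K)) ⬝ᵥ P *ᵥ (C • (Pi.single i0 1 : n → K)) /
        ((C • (Pi.single i0 1 : n → K)) ⬝ᵥ x) = C * P i0 i0 / x i0 := by
  have value_at_vertex := smul_single_dotProduct_mulVec_div_dotProduct P x hC.ne' i0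
  have vertex_nonneg : 0 ≤ C • (Pi.single i0 1 : n → K) :=
    smul_nonneg hC.le (Pi.single_nonneg.mpr zero_le_one)
  have vertex_sum : ∑ i, (C • (Pi.single i0 1 : n → K)) i = C := by
    simp [← Finset.mul_sum]
  refine ⟨⟨vertex_nonneg, vertex_sum⟩, ?_, value_at_vertex⟩
  rintro h ⟨h_nonneg, h_sum⟩
  have h_pos : 0 < h := lt_of_le_of_ne h_nonneg <| by
    rintro rfl
    exact hC.ne (by simpa using h_sum)
  have diag_le : ∀ i, P i i ≤ P i0 i0 / x i0 * x i := fun i => (div_le_iff₀ (hx i)).mp (hi0 i)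
  rw [value_at_vertex, mul_div_assoc, ← h_sum]
  exact dotProduct_mulVec_div_dotProduct_le_sum_mul hP diag_le h_nonneg
    (dotProduct_pos_of_pos_of_forall_pos h_pos hx)

end Field

/-- Theorem 1 of the paper: under the total-energy (ℓ¹) constraint, the
information-optimal encoding is the scaled standard basis vector at the index
maximizing `P i i / x i`. -/
theorem stmt_0 {n : Type*} [Fintype n] [DecidableEq n] [Nonempty n]
    (P : Matrix n n ℝ) (hP : P.PosDef) (x : n → ℝ) (hx : ∀ i, 0 < x i)
    (C : ℝ) (hC : 0 < C) (i0 : n) (hi0 : ∀ i, P i i / x i ≤ P i0 i0 / x i0) :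
    (C • (Pi.single i0 1 : n → ℝ)) ∈ {h : n → ℝ | (∀ i, 0 ≤ h i) ∧ ∑ i, h i = C} ∧
    (∀ h ∈ {h : n → ℝ | (∀ i, 0 ≤ h i) ∧ ∑ i, h i = C},
      h ⬝ᵥ P.mulVec h / h ⬝ᵥ x ≤
        (C • (Pi.single i0 1 : n → ℝ)) ⬝ᵥ P.mulVec (C • (Pi.single i0 1 : n → ℝ)) /
          ((C • (Pi.single i0 1 : n → ℝ)) ⬝ᵥ x)) ∧
    (C • (Pi.single i0 1 : n → ℝ)) ⬝ᵥ P.mulVec (C • (Pi.single i0 1 : n → ℝ)) /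
        ((C • (Pi.single i0 1 : n → ℝ)) ⬝ᵥ x) = C * P i0 i0 / x i0 := by
  exact stmt_0_general P (posSemidef_apply_add_apply_le hP.posSemidef) x hx C hC i0 hi0
end

section
/- Let n be a nonempty finite index type, let P : Matrix n n ℝ be a symmetric positive semidefinite matrix, let x : n → ℝ be a vector with xᵢ > 0 for every i, and let C > 0. Then for every h in the scaled simplex S_C = {h : n → ℝ | hᵢ ≥ 0 for all i, ∑ᵢ hᵢ = C}, one has (hᵀ P h)/(hᵀ x) ≤ C · max_i (Pᵢᵢ/xᵢ), where the maximum is taken over all indices i ∈ n. -/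
open Matrix

/-!
Positivity of `P` on `eᵢ - eⱼ` gives `P i j + P j i ≤ P i i + P j j`. Averaging this over `i, j`
with the weights `h i * h j` bounds `hᵀ P h` by `(∑ i, h i) * ∑ i, h i * P i i`; and
`P i i ≤ M * x i` for the maximal ratio `M` bounds the second factor by `M * hᵀ x`.
-/

section

variable {n R : Type*}

theorem apply_add_apply_swap_le_of_posSemidef [Ring R] [PartialOrder R] [StarRing R]
    [IsOrderedAddMonoid R] {P : Matrix n n R} (hP : P.PosSemidef) (i j : n) :
    P i j + P j i ≤ P i i + P j j := by
  have quadForm_nonneg := (hP.submatrix ![i, j]).dotProduct_mulVec_nonneg ![1, -1]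
  rw [← sub_nonneg]
  convert quadForm_nonneg using 1
  simp only [dotProduct, mulVec, submatrix_apply, Fin.sum_univ_two, Pi.star_apply, cons_val_zero,
    cons_val_one, star_one, star_neg]
  noncomm_ring

variable [Fintype n]

theorem dotProduct_pos_of_nonneg_of_sum_pos [Semiring R] [LinearOrder R] [IsStrictOrderedRing R]
    {h x : n → R} (hh : 0 ≤ h) (hsum : 0 < ∑ i, h i) (hx : ∀ i, 0 < x i) : 0 < h ⬝ᵥ x := by
  obtain ⟨i, hi, hhi⟩ := Finset.exists_lt_of_sum_lt (f := 0) (g := h) (s := Finset.univ)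
    (by simpa using hsum)
  exact Finset.sum_pos' (fun j _ => mul_nonneg (hh j) (hx j).le) ⟨i, hi, mul_pos hhi (hx i)⟩

theorem dotProduct_mulVec_mono_of_nonneg_s1 [Semiring R] [PartialOrder R] [IsOrderedRing R]
    {P Q : Matrix n n R} (hPQ : ∀ i j, P i j ≤ Q i j) {h : n → R} (hh : 0 ≤ h) :
    h ⬝ᵥ P *ᵥ h ≤ h ⬝ᵥ Q *ᵥ h :=
  dotProduct_le_dotProduct_of_nonneg_left
    (fun i => dotProduct_le_dotProduct_of_nonneg_right (hPQ i) hh) hh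

theorem dotProduct_mulVec_le_sum_mul_dotProduct_diag [CommRing R] [LinearOrder R]
    [IsStrictOrderedRing R] {P : Matrix n n R} (hP : ∀ i j, P i j + P j i ≤ P i i + P j j)
    {h : n → R} (hh : 0 ≤ h) :
    h ⬝ᵥ P *ᵥ h ≤ (∑ i, h i) * h ⬝ᵥ P.diag := by
  let Q : Matrix n n R := vecMulVec P.diag 1 + vecMulVec 1 P.diag
  have entry_le : ∀ i j, (P + Pᵀ) i j ≤ Q i j := by
    simpa [Q, vecMulVec_apply] using hP
  suffices 2 * h ⬝ᵥ P *ᵥ h ≤ 2 * ((∑ i, h i) * h ⬝ᵥ P.diag) from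
    le_of_mul_le_mul_left this two_pos
  calc
    2 * h ⬝ᵥ P *ᵥ h = h ⬝ᵥ (P + Pᵀ) *ᵥ h := by
      rw [add_mulVec, dotProduct_add, dotProduct_transpose_mulVec, two_mul]
    _ ≤ h ⬝ᵥ Q *ᵥ h := dotProduct_mulVec_mono_of_nonneg_s1 entry_le hh
    _ = 2 * ((∑ i, h i) * h ⬝ᵥ P.diag) := by
      simp only [Q, add_mulVec, vecMulVec_mulVec, dotProduct_add, op_smul_eq_smul, dotProduct_smul,
        smul_eq_mul, one_dotProduct, dotProduct_one, dotProduct_comm P.diag h]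
      ring

theorem stmt_1_general {K : Type*} [Field K] [LinearOrder K] [IsStrictOrderedRing K] [Nonempty n]
    (P : Matrix n n K) (hP : ∀ i j, P i j + P j i ≤ P i i + P j j)
    (x : n → K) (hx : ∀ i, 0 < x i) (C : K) (hC : 0 < C) :
    ∀ h ∈ {h : n → K | (∀ i, 0 ≤ h i) ∧ ∑ i, h i = C},
      h ⬝ᵥ P.mulVec h / h ⬝ᵥ x ≤
        C * Finset.univ.sup' Finset.univ_nonempty (fun i => P i i / x i) := by
  rintro h ⟨hh, hsum⟩
  set M := Finset.univ.sup' Finset.univ_nonempty (fun i => P i i / x i)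
  have diag_le : P.diag ≤ M • x := fun i =>
    (div_le_iff₀ (hx i)).1 (Finset.le_sup' (fun i => P i i / x i) (Finset.mem_univ i))
  have h_dot_x_pos : 0 < h ⬝ᵥ x :=
    dotProduct_pos_of_nonneg_of_sum_pos hh (hsum ▸ hC) hx
  rw [div_le_iff₀ h_dot_x_pos]
  calc
    h ⬝ᵥ P *ᵥ h ≤ (∑ i, h i) * h ⬝ᵥ P.diag :=
      dotProduct_mulVec_le_sum_mul_dotProduct_diag hP hh
    _ = C * h ⬝ᵥ P.diag := by rw [hsum]
    _ ≤ C * h ⬝ᵥ (M • x) := by gcongr; exact dotProduct_le_dotProduct_of_nonneg_left diag_le hh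
    _ = C * M * h ⬝ᵥ x := by rw [dotProduct_smul, smul_eq_mul, mul_assoc]

end

/-- The Rayleigh-type fractional objective is bounded on the scaled simplex by
`C` times the maximal diagonal ratio `P i i / x i`. -/
theorem stmt_1 {n : Type*} [Fintype n] [DecidableEq n] [Nonempty n]
    (P : Matrix n n ℝ) (hP : P.PosSemidef) (x : n → ℝ) (hx : ∀ i, 0 < x i)
    (C : ℝ) (hC : 0 < C) :
    ∀ h ∈ {h : n → ℝ | (∀ i, 0 ≤ h i) ∧ ∑ i, h i = C},
      h ⬝ᵥ P.mulVec h / h ⬝ᵥ x ≤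
        C * Finset.univ.sup' Finset.univ_nonempty (fun i => P i i / x i) :=
  stmt_1_general P (apply_add_apply_swap_le_of_posSemidef hP) x hx C hC
end

section
/- Let n be a finite index type, let P : Matrix n n ℝ be a symmetric positive semidefinite matrix, let h : n → ℝ, let β ∈ ℝ, and let R > 0. Define K = (β / (β² · hᵀ P h + R)) • (P h) and the posterior covariance P' = (I − β • (K hᵀ)) * P. Then det(P') = det(P) · R / (β² · hᵀ P h + R); in particular det(P') ≤ det(P). -/
open Matrix

/-!
The update multiplies `P` by a rank-one perturbation of the identity, so the matrix determinant
lemma gives `det P' = (1 - β hᵀ K) det P`. For the Kalman gain, with `S = β² hᵀ P h + R` the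
innovation variance, the scalar factor is `1 - β² hᵀ P h / S = R / S`.
-/

section RankOneUpdate

variable {n A : Type*} [Fintype n] [DecidableEq n] [CommRing A]

lemma det_one_sub_vecMulVec (u v : n → A) : (1 - vecMulVec u v).det = 1 - v ⬝ᵥ u := by
  have one_sub_eq : 1 - vecMulVec u v = 1 + replicateCol Unit (-u) * replicateRow Unit v := by
    rw [← vecMulVec_eq, neg_vecMulVec, sub_eq_add_neg]
  rw [one_sub_eq, det_one_add_replicateCol_mul_replicateRow, dotProduct_neg, sub_eq_add_neg]

lemma det_one_sub_smul_vecMulVec_mul (P : Matrix n n A) (β : A) (u v : n → A) :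
    ((1 - β • vecMulVec u v) * P).det = (1 - β * (v ⬝ᵥ u)) * P.det := by
  rw [det_mul, ← smul_vecMulVec, det_one_sub_vecMulVec, dotProduct_smul, smul_eq_mul]

end RankOneUpdate

section KalmanUpdate

variable {n 𝕜 : Type*} [Fintype n] [Field 𝕜]

/-- The innovation variance `β² hᵀ P h + R`: the predicted variance of a scalar measurement
`β hᵀ x + ε` when the state `x` has covariance `P` and the independent noise `ε` has
variance `R`. -/
def innovationVariance (P : Matrix n n 𝕜) (h : n → 𝕜) (β R : 𝕜) : 𝕜 :=
  β ^ 2 * (h ⬝ᵥ P *ᵥ h) + R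

lemma le_innovationVariance [LinearOrder 𝕜] [IsStrictOrderedRing 𝕜] {P : Matrix n n 𝕜} {h : n → 𝕜}
    (hq : 0 ≤ h ⬝ᵥ P *ᵥ h) (β R : 𝕜) : R ≤ innovationVariance P h β R :=
  le_add_of_nonneg_left (mul_nonneg (sq_nonneg β) hq)

/-- The Kalman gain `K = (β / (β² hᵀ P h + R)) P h`, which weights the innovation in the state
update. It is the junk value `0` when the innovation variance vanishes. -/
def kalmanGain (P : Matrix n n 𝕜) (h : n → 𝕜) (β R : 𝕜) : n → 𝕜 :=
  (β / innovationVariance P h β R) • P *ᵥ h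

/-- The covariance `P' = (I - β K hᵀ) P` of the state after one scalar measurement, in terms of
its covariance `P` before it. -/
def posteriorCovariance [DecidableEq n] (P : Matrix n n 𝕜) (h : n → 𝕜) (β R : 𝕜) :
    Matrix n n 𝕜 :=
  (1 - β • vecMulVec (kalmanGain P h β R) h) * P

lemma one_sub_mul_dotProduct_kalmanGain {P : Matrix n n 𝕜} {h : n → 𝕜} {β R : 𝕜}
    (hS : innovationVariance P h β R ≠ 0) :
    1 - β * (h ⬝ᵥ kalmanGain P h β R) = R / innovationVariance P h β R := by
  rw [kalmanGain, dotProduct_smul, smul_eq_mul, eq_div_iff hS]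
  field_simp
  rw [innovationVariance]
  ring

variable [DecidableEq n]

theorem det_posteriorCovariance {P : Matrix n n 𝕜} {h : n → 𝕜} {β R : 𝕜}
    (hS : innovationVariance P h β R ≠ 0) :
    (posteriorCovariance P h β R).det = P.det * R / innovationVariance P h β R := by
  rw [posteriorCovariance, det_one_sub_smul_vecMulVec_mul,
    one_sub_mul_dotProduct_kalmanGain hS, mul_comm, mul_div_assoc]

variable [LinearOrder 𝕜] [IsStrictOrderedRing 𝕜]

theorem det_posteriorCovariance_le {P : Matrix n n 𝕜} {h : n → 𝕜} {β R : 𝕜}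
    (hdet : 0 ≤ P.det) (hq : 0 ≤ h ⬝ᵥ P *ᵥ h) (hS : 0 < innovationVariance P h β R) :
    (posteriorCovariance P h β R).det ≤ P.det := by
  rw [det_posteriorCovariance hS.ne', div_le_iff₀ hS]
  exact mul_le_mul_of_nonneg_left (le_innovationVariance hq β R) hdet

theorem stmt_8_general {P : Matrix n n 𝕜} {h : n → 𝕜} {β R : 𝕜}
    (hdet : 0 ≤ P.det) (hq : 0 ≤ h ⬝ᵥ P *ᵥ h) (hS : 0 < innovationVariance P h β R) :
    (posteriorCovariance P h β R).det = P.det * R / innovationVariance P h β R ∧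
      (posteriorCovariance P h β R).det ≤ P.det :=
  ⟨det_posteriorCovariance hS.ne', det_posteriorCovariance_le hdet hq hS⟩

end KalmanUpdate

/-- Determinant of the Kalman-type posterior covariance:
`det P' = det P · R / (β² hᵀ P h + R) ≤ det P`. -/
theorem stmt_8 {n : Type*} [Fintype n] [DecidableEq n]
    (P : Matrix n n ℝ) (hP : P.PosSemidef) (h : n → ℝ) (β : ℝ) (R : ℝ)
    (hR : 0 < R) :
    (((1 : Matrix n n ℝ) -
          β • vecMulVec ((β / (β ^ 2 * (h ⬝ᵥ P.mulVec h) + R)) • P.mulVec h) h)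
        * P).det =
      P.det * R / (β ^ 2 * (h ⬝ᵥ P.mulVec h) + R) ∧
    (((1 : Matrix n n ℝ) -
          β • vecMulVec ((β / (β ^ 2 * (h ⬝ᵥ P.mulVec h) + R)) • P.mulVec h) h)
        * P).det ≤ P.det := by
  have hq : 0 ≤ h ⬝ᵥ P *ᵥ h := hP.dotProduct_mulVec_nonneg h
  exact stmt_8_general hP.det_nonneg hq (hR.trans_le (le_innovationVariance hq β R))
end

section
/- Let n be a finite index type, let P : Matrix n n ℝ be a symmetric positive semidefinite matrix, let h : n → ℝ, let β ∈ ℝ, and let R > 0. Define K = (β / (β² · hᵀ P h + R)) • (P h) and the posterior covariance P' = (I − β • (K hᵀ)) * P. Then the trace satisfies Tr(P') = Tr(P) − β² · (hᵀ P² h) / (β² · hᵀ P h + R), where P² = P * P. In particular, when β ≠ 0 this equals Tr(P) − (hᵀ P² h) / (hᵀ P h + R/β²), the mean Cramér–Rao bound after the measurement. -/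
open Matrix

section TraceDowndate

variable {n : Type*} [Fintype n] [DecidableEq n]

theorem trace_one_sub_vecMulVec_mul {α : Type*} [CommRing α] (u v : n → α) (A : Matrix n n α) :
    ((1 - vecMulVec u v) * A).trace = A.trace - v ⬝ᵥ A *ᵥ u := by
  rw [sub_mul, one_mul, trace_sub, vecMulVec_mul, trace_vecMulVec, dotProduct_comm,
    dotProduct_mulVec]

-- `s` is the innovation variance and `hK` the normal equation that defines the Kalman gain `K`.
theorem trace_one_sub_smul_vecMulVec_mul_of_smul_eq {𝕜 : Type*} [Field 𝕜] {P : Matrix n n 𝕜}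
    {h K : n → 𝕜} {β s : 𝕜} (hs : s ≠ 0) (hK : s • K = β • P *ᵥ h) :
    ((1 - β • vecMulVec K h) * P).trace = P.trace - β ^ 2 * (h ⬝ᵥ (P * P) *ᵥ h) / s := by
  have gain_proj : s * (h ⬝ᵥ P *ᵥ K) = β * (h ⬝ᵥ (P * P) *ᵥ h) := by
    simpa only [mulVec_smul, mulVec_mulVec, dotProduct_smul, smul_eq_mul]
      using congrArg (fun x => h ⬝ᵥ P *ᵥ x) hK
  rw [← smul_vecMulVec, trace_one_sub_vecMulVec_mul, mulVec_smul, dotProduct_smul, smul_eq_mul,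
    sub_right_inj, eq_div_iff hs]
  linear_combination β * gain_proj

end TraceDowndate

theorem mul_div_mul_add_eq_div_add_div {𝕜 : Type*} [Field 𝕜] {c : 𝕜} (hc : c ≠ 0) (a b r : 𝕜) :
    c * b / (c * a + r) = b / (a + r / c) := by
  rw [← mul_div_mul_left b (a + r / c) hc, mul_add, mul_div_cancel₀ r hc]

theorem mul_dotProduct_mulVec_add_pos_of_posSemidef {n α : Type*} [Fintype n] [Ring α]
    [PartialOrder α] [IsOrderedRing α] [StarRing α] {P : Matrix n n α} (hP : P.PosSemidef)
    (x : n → α) {c r : α} (hc : 0 ≤ c) (hr : 0 < r) : 0 < c * (star x ⬝ᵥ P *ᵥ x) + r :=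
  add_pos_of_nonneg_of_pos (mul_nonneg hc (hP.dotProduct_mulVec_nonneg x)) hr

theorem stmt_9_general {𝕜 n : Type*} [Field 𝕜] [Fintype n] [DecidableEq n]
    (P : Matrix n n 𝕜) (h : n → 𝕜) (β R : 𝕜) (hS : β ^ 2 * (h ⬝ᵥ P *ᵥ h) + R ≠ 0) :
    ((1 - β • vecMulVec ((β / (β ^ 2 * (h ⬝ᵥ P *ᵥ h) + R)) • P *ᵥ h) h) * P).trace =
      P.trace - β ^ 2 * (h ⬝ᵥ (P * P) *ᵥ h) / (β ^ 2 * (h ⬝ᵥ P *ᵥ h) + R) ∧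
    (β ≠ 0 →
      ((1 - β • vecMulVec ((β / (β ^ 2 * (h ⬝ᵥ P *ᵥ h) + R)) • P *ᵥ h) h) * P).trace =
        P.trace - (h ⬝ᵥ (P * P) *ᵥ h) / (h ⬝ᵥ P *ᵥ h + R / β ^ 2)) := by
  have trace_eq := trace_one_sub_smul_vecMulVec_mul_of_smul_eq (P := P) (h := h) (β := β) hS
    (by rw [smul_smul, mul_div_cancel₀ β hS])
  refine ⟨trace_eq, fun hβ => ?_⟩
  rw [trace_eq, mul_div_mul_add_eq_div_add_div (pow_ne_zero 2 hβ)]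

/-- Trace of the posterior covariance: the mean Cramér–Rao bound after one
measurement is `Tr P − β² hᵀ P² h / (β² hᵀ P h + R)`. -/
theorem stmt_9 {n : Type*} [Fintype n] [DecidableEq n]
    (P : Matrix n n ℝ) (hP : P.PosSemidef) (h : n → ℝ) (β : ℝ) (R : ℝ)
    (hR : 0 < R) :
    (((1 : Matrix n n ℝ) -
          β • vecMulVec ((β / (β ^ 2 * (h ⬝ᵥ P.mulVec h) + R)) • P.mulVec h) h)
        * P).trace =
      P.trace - β ^ 2 * (h ⬝ᵥ (P * P).mulVec h) / (β ^ 2 * (h ⬝ᵥ P.mulVec h) + R) ∧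
    (β ≠ 0 →
      (((1 : Matrix n n ℝ) -
            β • vecMulVec ((β / (β ^ 2 * (h ⬝ᵥ P.mulVec h) + R)) • P.mulVec h) h)
          * P).trace =
        P.trace - (h ⬝ᵥ (P * P).mulVec h) / (h ⬝ᵥ P.mulVec h + R / β ^ 2)) := by
  have innovation_variance_pos : 0 < β ^ 2 * (h ⬝ᵥ P *ᵥ h) + R :=
    mul_dotProduct_mulVec_add_pos_of_posSemidef hP h (sq_nonneg β) hR
  exact stmt_9_general P h β R innovation_variance_pos.ne'
end

section
/- Let n be a finite index type, let P : Matrix n n ℝ be a symmetric positive definite matrix, let h : n → ℝ, let β ∈ ℝ, and let R > 0. Define K = (β / (β² · hᵀ P h + R)) • (P h) and the posterior covariance P' = (I − β • (K hᵀ)) * P. Then P' is invertible with inverse P'⁻¹ = P⁻¹ + (β²/R) • (h hᵀ); equivalently, P' * (P⁻¹ + (β²/R) • (h hᵀ)) = I. -/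
open Matrix

/-!
Multiplying the information matrix by `P` on the left gives `1 + (β² / R) • u hᵀ` with `u = P h`,
and the other factor `1 - β • K hᵀ` of the posterior covariance is `1` plus a multiple of the same
rank-one matrix. Since `u hᵀ` squares to `(hᵀ u) • u hᵀ`, the product is again of this form, and the
gain is the one for which its coefficient of `u hᵀ` vanishes.
-/

section CommRing

variable {n A : Type*} [Fintype n] [DecidableEq n] [CommRing A]

theorem one_sub_smul_vecMulVec_mul_one_add_smul_vecMulVec (u v : n → A) (a b : A) :
    (1 - a • vecMulVec u v) * (1 + b • vecMulVec u v) =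
      1 + (b - a - a * b * (v ⬝ᵥ u)) • vecMulVec u v := by
  have h_sq : vecMulVec u v * vecMulVec u v = (v ⬝ᵥ u) • vecMulVec u v := by
    rw [vecMulVec_mul_vecMulVec, vecMulVec_smul]
  simp only [sub_mul, mul_add, one_mul, mul_one, smul_mul_assoc, mul_smul_comm, h_sq]
  module

theorem mul_inv_add_smul_vecMulVec {P : Matrix n n A} (hP : IsUnit P) (c : A) (u v : n → A) :
    P * (P⁻¹ + c • vecMulVec u v) = 1 + c • vecMulVec (P *ᵥ u) v := by
  rw [mul_add, mul_nonsing_inv P ((isUnit_iff_isUnit_det P).1 hP), mul_smul_comm, mul_vecMulVec]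

end CommRing

section Field

variable {n 𝕜 : Type*} [Fintype n] [Field 𝕜]

variable {P : Matrix n n 𝕜} {h : n → 𝕜} {β R : 𝕜}

theorem sq_div_sub_mul_div_innovationVariance (hR : R ≠ 0)
    (hS : innovationVariance P h β R ≠ 0) :
    β ^ 2 / R - β * (β / innovationVariance P h β R) =
      β * (β / innovationVariance P h β R) * (β ^ 2 / R) * (h ⬝ᵥ P *ᵥ h) := by
  field_simp
  rw [innovationVariance]
  ring

variable [DecidableEq n]

theorem posteriorCovariance_mul_inv_add (hP : IsUnit P) (hR : R ≠ 0)
    (hS : innovationVariance P h β R ≠ 0) :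
    posteriorCovariance P h β R * (P⁻¹ + (β ^ 2 / R) • vecMulVec h h) = 1 := by
  rw [posteriorCovariance, kalmanGain, Matrix.mul_assoc, mul_inv_add_smul_vecMulVec hP,
    smul_vecMulVec, smul_smul, one_sub_smul_vecMulVec_mul_one_add_smul_vecMulVec,
    sq_div_sub_mul_div_innovationVariance hR hS, sub_self, zero_smul, add_zero]

theorem stmt_12_general (hP : IsUnit P) (hR : R ≠ 0) (hS : innovationVariance P h β R ≠ 0) :
    IsUnit (posteriorCovariance P h β R) ∧
      (posteriorCovariance P h β R)⁻¹ = P⁻¹ + (β ^ 2 / R) • vecMulVec h h ∧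
      posteriorCovariance P h β R * (P⁻¹ + (β ^ 2 / R) • vecMulVec h h) = 1 := by
  have h_mul := posteriorCovariance_mul_inv_add hP hR hS
  exact ⟨.of_mul_eq_one _ h_mul, inv_eq_right_inv h_mul, h_mul⟩

end Field

theorem innovationVariance_pos {n : Type*} [Fintype n] {P : Matrix n n ℝ} (hP : P.PosSemidef)
    (h : n → ℝ) (β : ℝ) {R : ℝ} (hR : 0 < R) : 0 < innovationVariance P h β R := by
  have h_nonneg : 0 ≤ h ⬝ᵥ P *ᵥ h := hP.dotProduct_mulVec_nonneg h
  rw [innovationVariance]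
  positivity

/-- Sherman–Morrison / information-form identity: the posterior Fisher
information matrix is `P⁻¹ + (β²/R) h hᵀ`. -/
theorem stmt_12 {n : Type*} [Fintype n] [DecidableEq n]
    (P : Matrix n n ℝ) (hP : P.PosDef) (h : n → ℝ) (β : ℝ) (R : ℝ)
    (hR : 0 < R) :
    IsUnit (((1 : Matrix n n ℝ) -
          β • vecMulVec ((β / (β ^ 2 * (h ⬝ᵥ P.mulVec h) + R)) • P.mulVec h) h)
        * P) ∧
    (((1 : Matrix n n ℝ) -
          β • vecMulVec ((β / (β ^ 2 * (h ⬝ᵥ P.mulVec h) + R)) • P.mulVec h) h)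
        * P)⁻¹ = P⁻¹ + (β ^ 2 / R) • vecMulVec h h ∧
    (((1 : Matrix n n ℝ) -
          β • vecMulVec ((β / (β ^ 2 * (h ⬝ᵥ P.mulVec h) + R)) • P.mulVec h) h)
        * P) * (P⁻¹ + (β ^ 2 / R) • vecMulVec h h) = 1 :=
  stmt_12_general hP.isUnit hR.ne' (innovationVariance_pos hP.posSemidef h β hR).ne'
end
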